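/- Let σ0 > 0 and β ∈ (0,1). Let G be the cumulative distribution function of the centered Gaussian of variance 3σ0², with derivative G' = γ_{0,√3σ0}, and for B ∈ ℕ set T(B) := σ0·√(6β(log 2)B) and the B-bit thresholds t_k := G^{−1}((k−1)·2^{−B}). Then for every B and every k such that [t_k, t_{k+1}] ⊆ [−T(B), T(B)], the bin width satisfies τ_k := t_{k+1} − t_k ≤ 2^{−B}/G'(T(B)) = √(6π)·σ0·2^{−(1−β)B}. -/

import Mathlib

/-!
The compressor `G` is an antiderivative of the Gaussian density `g` of standard deviation `√3 σ0`,
and `g` is even and decreasing in `|t|`. So on a bin `[a, b] ⊆ [-T, T]` one has `g ≥ g(T)`, whence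
`2 ^ (-B) = G b - G a = ∫ t in a..b, g t ≥ (b - a) g(T)`. The value `T(B)` is chosen so that
`T² / (2 · 3σ0²) = β B log 2`, which gives `g(T) = 2 ^ (-βB) / (√(6π) σ0)`.
-/

open MeasureTheory

/-- Centered Gaussian pdf of standard deviation σ. -/
noncomputable def gaussPdf (σ t : ℝ) : ℝ :=
  (2 * Real.pi * σ ^ 2) ^ (-(1:ℝ) / 2) * Real.exp (-(t ^ 2) / (2 * σ ^ 2))

/-- The optimal compressor associated with γ_{0,σ0}: the cumulative distribution
function of the centered Gaussian of variance 3σ0². -/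
noncomputable def compressorG (σ0 lam : ℝ) : ℝ :=
  ∫ t in Set.Iic lam, gaussPdf (Real.sqrt 3 * σ0) t

/-- The transition value T(B) = σ0·√(6β(log 2)B). -/
noncomputable def transitionT (σ0 β : ℝ) (B : ℕ) : ℝ :=
  σ0 * Real.sqrt (6 * β * Real.log 2 * (B : ℝ))

theorem gaussPdf_pos {σ : ℝ} (hσ : 0 < σ) (t : ℝ) : 0 < gaussPdf σ t := by
  have := Real.pi_pos
  unfold gaussPdf
  positivity

theorem gaussPdf_integrable {σ : ℝ} (hσ : 0 < σ) : Integrable (gaussPdf σ) := by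
  have hb : 0 < 1 / (2 * σ ^ 2) := by positivity
  refine ((integrable_exp_neg_mul_sq hb).const_mul
    ((2 * Real.pi * σ ^ 2) ^ (-(1:ℝ) / 2))).congr (Filter.Eventually.of_forall fun x => ?_)
  simp only [gaussPdf]
  congr 2
  ring

theorem gaussPdf_le_of_mem_Icc {σ T x : ℝ} (hσ : 0 < σ) (hx : x ∈ Set.Icc (-T) T) :
    gaussPdf σ T ≤ gaussPdf σ x := by
  have := Real.pi_pos
  have hsq : x ^ 2 ≤ T ^ 2 := sq_le_sq' hx.1 hx.2
  unfold gaussPdf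
  gcongr

/-- An increment of the compressor over `[a, b] ⊆ [-T, T]` is at least the length of the interval
times the smallest density value `G'(T)`. -/
theorem mul_gaussPdf_le_compressorG_sub {σ0 T a b : ℝ} (hσ0 : 0 < σ0) (hab : a ≤ b)
    (h : Set.Icc a b ⊆ Set.Icc (-T) T) :
    (b - a) * gaussPdf (Real.sqrt 3 * σ0) T ≤ compressorG σ0 b - compressorG σ0 a := by
  have hσ : 0 < Real.sqrt 3 * σ0 := by positivity
  have hint := gaussPdf_integrable hσ
  have hsub : compressorG σ0 b - compressorG σ0 a
      = ∫ x in a..b, gaussPdf (Real.sqrt 3 * σ0) x :=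
    intervalIntegral.integral_Iic_sub_Iic hint.integrableOn hint.integrableOn
  rw [hsub]
  have hmono := intervalIntegral.integral_mono_on hab
    (intervalIntegrable_const (c := gaussPdf (Real.sqrt 3 * σ0) T))
    hint.intervalIntegrable (fun x hx => gaussPdf_le_of_mem_Icc hσ (h hx))
  simpa using hmono

theorem gaussPdf_transitionT {σ0 β : ℝ} (hσ0 : 0 < σ0) (hβ : 0 < β) (B : ℕ) :
    gaussPdf (Real.sqrt 3 * σ0) (transitionT σ0 β B)
      = (Real.sqrt (6 * Real.pi) * σ0)⁻¹ * 2 ^ (-(β * (B : ℝ))) := by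
  have hpi := Real.pi_pos
  have hlog : 0 < Real.log 2 := Real.log_pos one_lt_two
  have h3 : Real.sqrt 3 ^ 2 = 3 := Real.sq_sqrt (by norm_num)
  have hT : transitionT σ0 β B ^ 2 = σ0 ^ 2 * (6 * β * Real.log 2 * (B : ℝ)) := by
    rw [transitionT, mul_pow, Real.sq_sqrt (by positivity)]
  have hnorm : (2 * Real.pi * (Real.sqrt 3 * σ0) ^ 2) ^ (-(1:ℝ) / 2)
      = (Real.sqrt (6 * Real.pi) * σ0)⁻¹ := by
    have e : 2 * Real.pi * (Real.sqrt 3 * σ0) ^ 2 = 6 * Real.pi * σ0 ^ 2 := by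
      rw [mul_pow, h3]; ring
    rw [e, neg_div, Real.rpow_neg (by positivity), ← Real.sqrt_eq_rpow,
      Real.sqrt_mul (by positivity), Real.sqrt_sq hσ0.le]
  rw [gaussPdf, hnorm, hT, Real.rpow_def_of_pos two_pos, mul_pow, h3]
  congr 2
  field_simp
  ring

theorem bin_width_bound_inside_transition
    (σ0 β : ℝ) (hσ0 : 0 < σ0) (hβ : β ∈ Set.Ioo (0:ℝ) 1)
    (t : ℕ → ℕ → ℝ)
    (ht : ∀ B k : ℕ, 2 ≤ k → k ≤ 2 ^ B →
      compressorG σ0 (t B k) = ((k : ℝ) - 1) * 2 ^ (-(B : ℝ)))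
    (B k : ℕ) (hk2 : 2 ≤ k) (hk : k + 1 ≤ 2 ^ B)
    (hbin : Set.Icc (t B k) (t B (k + 1))
      ⊆ Set.Icc (-(transitionT σ0 β B)) (transitionT σ0 β B)) :
    t B (k + 1) - t B k ≤
        2 ^ (-(B : ℝ)) / gaussPdf (Real.sqrt 3 * σ0) (transitionT σ0 β B) ∧
      2 ^ (-(B : ℝ)) / gaussPdf (Real.sqrt 3 * σ0) (transitionT σ0 β B) =
        Real.sqrt (6 * Real.pi) * σ0 * 2 ^ (-((1 - β) * (B : ℝ))) := by
  have hσ : 0 < Real.sqrt 3 * σ0 := by positivity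
  constructor
  · rw [le_div_iff₀ (gaussPdf_pos hσ _)]
    rcases le_total (t B k) (t B (k + 1)) with hab | hab
    · refine (mul_gaussPdf_le_compressorG_sub hσ0 hab hbin).trans_eq ?_
      rw [ht B k hk2 (by omega), ht B (k + 1) (by omega) hk]
      push_cast
      ring
    -- This ordering contradicts the monotonicity of `G`, but it need not be excluded: the left
    -- side is then nonpositive.
    · exact (mul_nonpos_of_nonpos_of_nonneg (sub_nonpos.mpr hab) (gaussPdf_pos hσ _).le).trans
        (by positivity)
  · have hpi := Real.pi_pos
    have hexp : (2:ℝ) ^ (-((1 - β) * (B : ℝ))) * 2 ^ (-(β * (B : ℝ))) = 2 ^ (-(B : ℝ)) := by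
      rw [← Real.rpow_add two_pos]
      congr 1
      ring
    rw [gaussPdf_transitionT hσ0 hβ.1, ← hexp]
    have h2 : (0:ℝ) < 2 ^ (-(β * (B : ℝ))) := by positivity
    field_simp
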